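/- Both U₋ and U₊ have infinitely many zeros on the open ray arg z = π/3, and the moduli of these zeros interlace: if (α_k)_{k≥1} and (β_k)_{k≥1} denote the increasing enumerations of the moduli of the zeros of U₋ and of U₊ on this ray, respectively, then β_k < α_k < β_{k+1} for every k ≥ 1. -/

import Mathlib

open Complex MeasureTheory Real

noncomputable section

/-- `w` is an entire solution of the Airy equation `w'' = z·w`
with prescribed (real) values of `w` and `w'` at the origin. -/
def IsAiry (w : ℂ → ℂ) (w0 w0' : ℝ) : Prop :=
  Differentiable ℂ w ∧ Differentiable ℂ (deriv w) ∧
  (∀ z : ℂ, deriv (deriv w) z = z * w z) ∧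
  w 0 = (w0 : ℂ) ∧ deriv w 0 = (w0' : ℂ)

/-- `Ai` is the standard Airy function of the first kind. -/
def IsAiryAi (Ai : ℂ → ℂ) : Prop :=
  IsAiry Ai ((3 : ℝ) ^ (-(2 : ℝ)/3) / Real.Gamma (2/3))
    (-((3 : ℝ) ^ (-(1 : ℝ)/3)) / Real.Gamma (1/3))

/-- `Bi` is the standard Airy function of the second kind. -/
def IsAiryBi (Bi : ℂ → ℂ) : Prop :=
  IsAiry Bi ((3 : ℝ) ^ (-(1 : ℝ)/6) / Real.Gamma (2/3))
    ((3 : ℝ) ^ ((1 : ℝ)/6) / Real.Gamma (1/3))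

/-- `U₋ = -√3·Ai + Bi`. -/
def Uminus (Ai Bi : ℂ → ℂ) : ℂ → ℂ := fun z => -(Real.sqrt 3 : ℂ) * Ai z + Bi z

/-- `U₊ = √3·Ai + Bi`. -/
def Uplus (Ai Bi : ℂ → ℂ) : ℂ → ℂ := fun z => (Real.sqrt 3 : ℂ) * Ai z + Bi z

/-- The moduli of the zeros of `U` on the open ray `arg z = π/3`. -/
def rayZeroModuli (U : ℂ → ℂ) : Set ℝ :=
  {r : ℝ | 0 < r ∧ U ((r : ℂ) * Complex.exp ((π/3 : ℝ) * Complex.I)) = 0}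

/-- `y` solves `y'' = -t·y` on the real line and `y'` is its derivative. -/
def IsReflectedAiry (y y' : ℝ → ℝ) : Prop :=
  ∀ t, HasDerivAt y (y' t) t ∧ HasDerivAt y' (-t * y t) t

theorem eq_zero_iff_of_mul_cos_eq_mul_sin {a b φ : ℝ} (hab : a ^ 2 + b ^ 2 ≠ 0)
    (h : a * Real.cos φ - b * Real.sin φ = 0) :
    (a = 0 ↔ Real.sin φ = 0) ∧ (b = 0 ↔ Real.cos φ = 0) := by
  have hsc := Real.sin_sq_add_cos_sq φ
  refine ⟨⟨fun h0 => ?_, fun h0 => ?_⟩, ⟨fun h0 => ?_, fun h0 => ?_⟩⟩ <;>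
    rw [h0] at h <;> simp_all <;> grind

namespace IsReflectedAiry

variable {y y' u u' v v' : ℝ → ℝ}

theorem wronskian_eq (hu : IsReflectedAiry u u') (hv : IsReflectedAiry v v') (t : ℝ) :
    v t * u' t - u t * v' t = v 0 * u' 0 - u 0 * v' 0 := by
  have h : ∀ s, HasDerivAt (fun s => v s * u' s - u s * v' s) 0 s := fun s => by
    refine (((hv s).1.mul (hu s).2).sub ((hu s).1.mul (hv s).2)).congr_deriv ?_
    ring
  exact is_const_of_deriv_eq_zero (fun s => (h s).differentiableAt) (fun s => (h s).deriv) t 0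

theorem eq_zero_of_wronskian_ne_zero (hy : IsReflectedAiry y y') (hu : IsReflectedAiry u u')
    (hv : IsReflectedAiry v v') (h0 : y 0 = 0) (h0' : y' 0 = 0)
    (hW : v 0 * u' 0 - u 0 * v' 0 ≠ 0) (t : ℝ) : y t = 0 := by
  have h1 := wronskian_eq hy hu t
  have h2 := wronskian_eq hy hv t
  have h3 := wronskian_eq hu hv t
  rw [h0, h0'] at h1 h2
  have : y t * (v 0 * u' 0 - u 0 * v' 0) = 0 := by
    rw [← h3]
    linear_combination u t * h2 - v t * h1
  exact (mul_eq_zero.mp this).resolve_right hW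

theorem sq_le (hy : IsReflectedAiry y y') {t : ℝ} (ht : 1 ≤ t) :
    y t ^ 2 ≤ y' 1 ^ 2 + y 1 ^ 2 := by
  have h : ∀ s, 0 < s →
      HasDerivAt (fun s => y' s ^ 2 / s + y s ^ 2) (-(y' s ^ 2 / s ^ 2)) s := fun s hs => by
    refine ((((hy s).2.pow 2).div (hasDerivAt_id s) hs.ne').add
      ((hy s).1.pow 2)).congr_deriv ?_
    simp
    field_simp
    ring
  have hanti : AntitoneOn (fun s => y' s ^ 2 / s + y s ^ 2) (Set.Ici 1) := by
    refine antitoneOn_of_deriv_nonpos (convex_Ici 1)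
      (fun s hs => (h s (by linarith [Set.mem_Ici.mp hs])).continuousAt.continuousWithinAt)
      (fun s hs => ?_) (fun s hs => ?_)
    all_goals
      rw [interior_Ici, Set.mem_Ioi] at hs
      have hd := h s (by linarith)
    · exact hd.differentiableAt.differentiableWithinAt
    · rw [hd.deriv]
      exact neg_nonpos.mpr (by positivity)
  have h1 := hanti (Set.mem_Ici.mpr le_rfl) (Set.mem_Ici.mpr ht) ht
  have h2 : 0 ≤ y' t ^ 2 / t := by positivity
  simp only [div_one] at h1
  linarith

/-- The phase (Prüfer angle) of the curve `v + i·u`. -/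
theorem exists_phase (hu : IsReflectedAiry u u') (hv : IsReflectedAiry v v')
    (hu0 : u 0 = 0) (hu0' : 0 < u' 0) (hv0 : 0 < v 0) :
    ∃ θ : ℝ → ℝ, StrictMono θ ∧ Continuous θ ∧ θ 0 = 0 ∧
      Filter.Tendsto θ Filter.atTop Filter.atTop ∧
      (∀ t, u t = 0 ↔ Real.sin (θ t) = 0) ∧ (∀ t, v t = 0 ↔ Real.cos (θ t) = 0) := by
  have hW : ∀ t, v t * u' t - u t * v' t = v 0 * u' 0 := fun t => by
    rw [wronskian_eq hu hv t, hu0, zero_mul, sub_zero]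
  have hWpos : 0 < v 0 * u' 0 := mul_pos hv0 hu0'
  have hS : ∀ t, 0 < u t ^ 2 + v t ^ 2 := fun t => by
    rcases eq_or_ne (u t) 0 with h | h
    · have hvt : v t ≠ 0 := fun h' => by
        have := hW t
        rw [h, h'] at this
        linarith
      positivity
    · positivity
  have hcu : Continuous u := continuous_iff_continuousAt.mpr fun t => (hu t).1.continuousAt
  have hcv : Continuous v := continuous_iff_continuousAt.mpr fun t => (hv t).1.continuousAt
  have hcont : Continuous fun t => v 0 * u' 0 / (u t ^ 2 + v t ^ 2) :=
    continuous_const.div ((hcu.pow 2).add (hcv.pow 2)) fun t => (hS t).ne'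
  set θ : ℝ → ℝ := fun t => ∫ s in (0 : ℝ)..t, v 0 * u' 0 / (u s ^ 2 + v s ^ 2) with hθ
  have hd : ∀ t, HasDerivAt θ (v 0 * u' 0 / (u t ^ 2 + v t ^ 2)) t := fun t =>
    (hcont.integral_hasStrictDerivAt 0 t).hasDerivAt
  have hθ0 : θ 0 = 0 := by simp [hθ]
  have hmono : StrictMono θ := strictMono_of_deriv_pos fun t => by
    rw [(hd t).deriv]
    exact div_pos hWpos (hS t)
  have hθc : Continuous θ := continuous_iff_continuousAt.mpr fun t => (hd t).continuousAt
  have hphase : ∀ t, u t * Real.cos (θ t) - v t * Real.sin (θ t) = 0 := fun t => by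
    have h : ∀ s, HasDerivAt (fun s => (u s * Real.cos (θ s) - v s * Real.sin (θ s)) ^ 2 /
        (u s ^ 2 + v s ^ 2)) 0 s := fun s => by
      have hSs := (hS s).ne'
      refine (((((hu s).1.mul (hd s).cos).sub ((hv s).1.mul (hd s).sin)).pow 2).div
        (((hu s).1.pow 2).add ((hv s).1.pow 2)) hSs).congr_deriv ?_
      rw [← hW s]
      simp [hSs]
      field_simp
      ring
    have := is_const_of_deriv_eq_zero (fun s => (h s).differentiableAt)
      (fun s => (h s).deriv) t 0
    simp only [hu0, hθ0, Real.sin_zero, zero_mul, mul_zero, sub_zero, ne_eq, OfNat.ofNat_ne_zero,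
      not_false_eq_true, zero_pow, zero_div, div_eq_zero_iff, (hS t).ne', or_false,
      pow_eq_zero_iff] at this
    exact this
  refine ⟨θ, hmono, hθc, hθ0, ?_, fun t => ?_, fun t => ?_⟩
  · set M := (u' 1 ^ 2 + u 1 ^ 2) + (v' 1 ^ 2 + v 1 ^ 2) with hM
    have hMpos : 0 < M := by
      have := hS 1
      nlinarith [sq_nonneg (u' 1), sq_nonneg (v' 1)]
    have hlow : ∀ t, 1 ≤ t → v 0 * u' 0 / M * (t - 1) ≤ θ t - θ 1 := fun t ht => by
      refine (convex_Ici (1 : ℝ)).mul_sub_le_image_sub_of_le_deriv hθc.continuousOn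
        (fun s _ => (hd s).differentiableAt.differentiableWithinAt) (fun s hs => ?_)
        1 (Set.mem_Ici.mpr le_rfl) t ht ht
      rw [interior_Ici, Set.mem_Ioi] at hs
      rw [(hd s).deriv]
      exact div_le_div_of_nonneg_left hWpos.le (hS s)
        (add_le_add (hu.sq_le hs.le) (hv.sq_le hs.le))
    refine Filter.tendsto_atTop_mono' Filter.atTop
      (f₁ := fun t => θ 1 + v 0 * u' 0 / M * (t - 1)) ?_ ?_
    · filter_upwards [Filter.eventually_ge_atTop 1] with t ht
      linarith [hlow t ht]
    · exact Filter.tendsto_atTop_add_const_left _ _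
        ((Filter.tendsto_atTop_add_const_right _ (-1) Filter.tendsto_id).const_mul_atTop
          (div_pos hWpos hMpos))
  · exact (eq_zero_iff_of_mul_cos_eq_mul_sin (hS t).ne' (hphase t)).1
  · exact (eq_zero_iff_of_mul_cos_eq_mul_sin (hS t).ne' (hphase t)).2

end IsReflectedAiry

theorem exists_interlacing_enumerations {θ : ℝ → ℝ} (hmono : StrictMono θ) (hc : Continuous θ)
    (h0 : θ 0 = 0) (htop : Filter.Tendsto θ Filter.atTop Filter.atTop) :
    ∃ α β : ℕ → ℝ, StrictMono α ∧ StrictMono β ∧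
      Set.range α = {r | 0 < r ∧ Real.sin (θ r) = 0} ∧
      Set.range β = {r | 0 < r ∧ Real.cos (θ r) = 0} ∧
      ∀ k : ℕ, β k < α k ∧ α k < β (k + 1) := by
  have hpi := Real.pi_pos
  have hsurj : ∀ x, 0 ≤ x → ∃ t, θ t = x := fun x hx => by
    obtain ⟨T, hT, hT0⟩ :=
      ((htop.eventually_ge_atTop x).and (Filter.eventually_ge_atTop 0)).exists
    obtain ⟨t, -, ht⟩ := intermediate_value_Icc hT0 hc.continuousOn ⟨h0.le.trans hx, hT⟩
    exact ⟨t, ht⟩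
  choose α hα using fun k : ℕ => hsurj ((k + 1) * π) (by positivity)
  choose β hβ using fun k : ℕ => hsurj ((2 * k + 1) * π / 2) (by positivity)
  have hpos : ∀ {r}, 0 < r ↔ 0 < θ r := fun {r} => by rw [← h0, hmono.lt_iff_lt, h0]
  refine ⟨α, β, fun i j hij => ?_, fun i j hij => ?_, ?_, ?_, fun k => ⟨?_, ?_⟩⟩
  · rw [← hmono.lt_iff_lt, hα, hα]
    gcongr
  · rw [← hmono.lt_iff_lt, hβ, hβ]
    gcongr
  · ext r
    constructor
    · rintro ⟨k, rfl⟩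
      refine ⟨hpos.mpr (by rw [hα]; positivity), ?_⟩
      rw [hα]
      exact_mod_cast Real.sin_nat_mul_pi (k + 1)
    · rintro ⟨hr, hs⟩
      obtain ⟨n, hn⟩ := Real.sin_eq_zero_iff.mp hs
      have hn0 : 0 < n := by
        have := hpos.mp hr
        rw [← hn] at this
        exact_mod_cast pos_of_mul_pos_left this hpi.le
      obtain ⟨k, rfl⟩ : ∃ k : ℕ, n = k + 1 := ⟨(n - 1).toNat, by omega⟩
      refine ⟨k, hmono.injective ?_⟩
      rw [hα, ← hn]
      push_cast
      rfl
  · ext r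
    constructor
    · rintro ⟨k, rfl⟩
      refine ⟨hpos.mpr (by rw [hβ]; positivity), Real.cos_eq_zero_iff.mpr ⟨k, ?_⟩⟩
      rw [hβ]
      push_cast
      rfl
    · rintro ⟨hr, hs⟩
      obtain ⟨n, hn⟩ := Real.cos_eq_zero_iff.mp hs
      have hn0 : 0 < 2 * n + 1 := by
        have := hpos.mp hr
        rw [hn, mul_div_assoc] at this
        exact_mod_cast pos_of_mul_pos_left this (by positivity)
      obtain ⟨k, rfl⟩ : ∃ k : ℕ, n = k := ⟨n.toNat, by omega⟩
      refine ⟨k, hmono.injective ?_⟩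
      rw [hβ, hn]
      push_cast
      rfl
  · rw [← hmono.lt_iff_lt, hα, hβ]
    linarith
  · rw [← hmono.lt_iff_lt, hα, hβ]
    push_cast
    linarith

theorem exp_pi_div_three_mul_I_pow_three :
    Complex.exp ((π / 3 : ℝ) * Complex.I) ^ 3 = -1 := by
  rw [← Complex.exp_nat_mul, ← Complex.exp_pi_mul_I]
  congr 1
  push_cast
  ring

/-- Restricting a solution of the Airy equation to a line through the origin in the direction
of a cube root of `-1` gives solutions of `y'' = -t·y`. -/
theorem isReflectedAiry_restrict {w : ℂ → ℂ} (hw : Differentiable ℂ w)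
    (hw' : Differentiable ℂ (deriv w)) (hode : ∀ z, deriv (deriv w) z = z * w z)
    {ω : ℂ} (hω : ω ^ 3 = -1) (κ : ℂ) (ℓ : ℂ →L[ℝ] ℝ) :
    IsReflectedAiry (fun t => ℓ (κ * w (t * ω))) (fun t => ℓ (κ * (deriv w (t * ω) * ω))) := by
  intro t
  have hline : HasDerivAt (fun s : ℝ => (s : ℂ) * ω) ω t := by
    simpa using (Complex.ofRealCLM.hasDerivAt (x := t)).mul_const ω
  constructor
  · exact ℓ.hasFDerivAt.comp_hasDerivAt t
      (((hw _).hasDerivAt.comp t hline).const_mul κ)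
  · have h := ℓ.hasFDerivAt.comp_hasDerivAt t
      ((((hw' _).hasDerivAt.comp t hline).mul_const ω).const_mul κ)
    refine h.congr_deriv ?_
    have : κ * (deriv (deriv w) (t * ω) * ω * ω) = (-t : ℝ) • (κ * w (t * ω)) := by
      rw [hode, Complex.real_smul]
      push_cast
      linear_combination κ * t * w (t * ω) * hω
    rw [this, map_smul, smul_eq_mul]

theorem IsAiry.const_mul_add {f g : ℂ → ℂ} {f0 f0' g0 g0' : ℝ} (hf : IsAiry f f0 f0')
    (hg : IsAiry g g0 g0') (a : ℝ) :
    IsAiry (fun z => a * f z + g z) (a * f0 + g0) (a * f0' + g0') := by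
  obtain ⟨hf1, hf2, hf3, hf4, hf5⟩ := hf
  obtain ⟨hg1, hg2, hg3, hg4, hg5⟩ := hg
  have hd : deriv (fun z => a * f z + g z) = fun z => a * deriv f z + deriv g z :=
    funext fun z => (((hf1 z).hasDerivAt.const_mul _).add (hg1 z).hasDerivAt).deriv
  refine ⟨(hf1.const_mul _).add hg1, ?_, fun z => ?_, ?_, ?_⟩
  · rw [hd]
    exact (hf2.const_mul _).add hg2
  · rw [hd]
    refine (((hf2 z).hasDerivAt.const_mul (a : ℂ)).add (hg2 z).hasDerivAt).deriv.trans ?_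
    rw [hf3, hg3]
    ring
  · simp [hf4, hg4]
  · simp [hd, hf5, hg5]

theorem sqrt_three_mul_rpow {x y : ℝ} (h : 1 / 2 + x = y) :
    Real.sqrt 3 * (3 : ℝ) ^ x = (3 : ℝ) ^ y := by
  rw [Real.sqrt_eq_rpow, ← Real.rpow_add (by norm_num), h]

theorem isAiry_Uminus {Ai Bi : ℂ → ℂ} (hAi : IsAiryAi Ai) (hBi : IsAiryBi Bi) :
    IsAiry (Uminus Ai Bi) 0 (2 * (3 : ℝ) ^ ((1 : ℝ) / 6) / Real.Gamma (1 / 3)) := by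
  have h := hAi.const_mul_add hBi (-Real.sqrt 3)
  have h1 := sqrt_three_mul_rpow (x := -2 / 3) (y := -1 / 6) (by norm_num)
  have h2 := sqrt_three_mul_rpow (x := -1 / 3) (y := 1 / 6) (by norm_num)
  convert h using 1
  · ext z
    simp [Uminus]
  · rw [← h1]
    ring
  · rw [← h2]
    ring

theorem isAiry_Uplus {Ai Bi : ℂ → ℂ} (hAi : IsAiryAi Ai) (hBi : IsAiryBi Bi) :
    IsAiry (Uplus Ai Bi) (2 * (3 : ℝ) ^ (-(1 : ℝ) / 6) / Real.Gamma (2 / 3)) 0 := by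
  have h := hAi.const_mul_add hBi (Real.sqrt 3)
  have h1 := sqrt_three_mul_rpow (x := -2 / 3) (y := -1 / 6) (by norm_num)
  have h2 := sqrt_three_mul_rpow (x := -1 / 3) (y := 1 / 6) (by norm_num)
  change IsAiry (Uplus Ai Bi) _ _ at h
  convert h using 1
  · rw [← h1]
    ring
  · rw [← h2]
    ring

/-- `U₋` and `U₊` have infinitely many zeros on the open ray `arg z = π/3`, and the
increasing enumerations `(α k)` and `(β k)` of their moduli interlace:
`β k < α k < β (k+1)` for all `k` (indexed from `0`, so `α 0 = α₁`, `β 0 = β₁`). -/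
theorem zeros_on_ray_interlace (Ai Bi : ℂ → ℂ)
    (hAi : IsAiryAi Ai) (hBi : IsAiryBi Bi) :
    ∃ α β : ℕ → ℝ, StrictMono α ∧ StrictMono β ∧
      Set.range α = rayZeroModuli (Uminus Ai Bi) ∧
      Set.range β = rayZeroModuli (Uplus Ai Bi) ∧
      ∀ k : ℕ, β k < α k ∧ α k < β (k + 1) := by
  obtain ⟨hm1, hm2, hm3, hm4, hm5⟩ := isAiry_Uminus hAi hBi
  obtain ⟨hp1, hp2, hp3, hp4, hp5⟩ := isAiry_Uplus hAi hBi
  have hd : 0 < 2 * (3 : ℝ) ^ ((1 : ℝ) / 6) / Real.Gamma (1 / 3) :=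
    div_pos (by positivity) (Real.Gamma_pos_of_pos (by norm_num))
  have hc : 0 < 2 * (3 : ℝ) ^ (-(1 : ℝ) / 6) / Real.Gamma (2 / 3) :=
    div_pos (by positivity) (Real.Gamma_pos_of_pos (by norm_num))
  set d := 2 * (3 : ℝ) ^ ((1 : ℝ) / 6) / Real.Gamma (1 / 3)
  set c := 2 * (3 : ℝ) ^ (-(1 : ℝ) / 6) / Real.Gamma (2 / 3)
  have hω := exp_pi_div_three_mul_I_pow_three
  have hω0 := Complex.exp_ne_zero ((π / 3 : ℝ) * Complex.I)
  unfold rayZeroModuli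
  set ω := Complex.exp ((π / 3 : ℝ) * Complex.I)
  have hderiv : ω⁻¹ * (d * ω) = d := by field_simp
  have hu := isReflectedAiry_restrict hm1 hm2 hm3 hω ω⁻¹ Complex.reCLM
  have hv := isReflectedAiry_restrict hp1 hp2 hp3 hω 1 Complex.reCLM
  have hui := isReflectedAiry_restrict hm1 hm2 hm3 hω ω⁻¹ Complex.imCLM
  have hvi := isReflectedAiry_restrict hp1 hp2 hp3 hω 1 Complex.imCLM
  have hu_im := hui.eq_zero_of_wronskian_ne_zero hu hv (by simp [hm4])
    (by simp [hm5, hderiv]) (by simp [hm4, hm5, hp4, hp5, hderiv, hc.ne', hd.ne'])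
  have hv_im := hvi.eq_zero_of_wronskian_ne_zero hu hv (by simp [hp4])
    (by simp [hp5]) (by simp [hm4, hm5, hp4, hp5, hderiv, hc.ne', hd.ne'])
  obtain ⟨θ, hmono, hcont, hθ0, htop, hsin, hcos⟩ := hu.exists_phase hv (by simp [hm4])
    (by simpa [hm5, hderiv] using hd) (by simpa [hp4] using hc)
  have hm : ∀ r : ℝ, Uminus Ai Bi (r * ω) = 0 ↔ Real.sin (θ r) = 0 := fun r => by
    rw [← hsin r]
    constructor
    · intro h
      simp [h]
    · intro h
      exact (mul_eq_zero.mp (Complex.ext h (hu_im r))).resolve_left (inv_ne_zero hω0)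
  have hp : ∀ r : ℝ, Uplus Ai Bi (r * ω) = 0 ↔ Real.cos (θ r) = 0 := fun r => by
    rw [← hcos r]
    constructor
    · intro h
      simp [h]
    · intro h
      exact (mul_eq_zero.mp (Complex.ext h (hv_im r))).resolve_left one_ne_zero
  simp only [hm, hp]
  exact exists_interlacing_enumerations hmono hcont hθ0 htop
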